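/- arXiv:0709.2705 — 2 statements merged into one kernel-verified Lean document; each statement's English description precedes it below -/
import Mathlib

section
/- Let u : ℝ × ℝⁿ → ℝ be a smooth solution of the PDE ∂u/∂t = Δu + P(u) with admissible decay, and suppose the action along the solution converges at both ends: A(u(t, ·)) → α₋ as t → −∞ and A(u(t, ·)) → α₊ as t → +∞, with α₋, α₊ ∈ ℝ. Then the energy of u equals the difference of the limiting actions: E(u) = α₋ − α₊; in particular a solution connecting two finite-action equilibria has finite energy. -/
open MeasureTheory Filter Topology
open scoped ENNReal

noncomputable section

/-- Euclidean space `ℝⁿ`. -/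
abbrev Spc (n : ℕ) := EuclideanSpace ℝ (Fin n)

/-- The Laplacian in the spatial variables. -/
noncomputable def lap {n : ℕ} (f : Spc n → ℝ) (x : Spc n) : ℝ :=
  ∑ i : Fin n, fderiv ℝ (fun y => fderiv ℝ f y (EuclideanSpace.single i 1)) x
    (EuclideanSpace.single i 1)

/-- The polynomial nonlinearity `P(f)(x) = -f(x)^N + ∑_{i<N} aᵢ(x) f(x)^i`. -/
noncomputable def Pfun {n N : ℕ} (a : Fin N → Spc n → ℝ) (f : Spc n → ℝ) (x : Spc n) : ℝ :=
  -(f x) ^ N + ∑ i : Fin N, a i x * f x ^ (i : ℕ)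

/-- The time derivative `∂u/∂t`. -/
noncomputable def timeDeriv {n : ℕ} (u : ℝ × Spc n → ℝ) (t : ℝ) (x : Spc n) : ℝ :=
  deriv (fun s => u (s, x)) t

/-- `u` is a global solution of `∂u/∂t = Δu + P(u)`. -/
def IsSol {n N : ℕ} (a : Fin N → Spc n → ℝ) (u : ℝ × Spc n → ℝ) : Prop :=
  ∀ t x, timeDeriv u t x = lap (fun y => u (t, y)) x + Pfun a (fun y => u (t, y)) x

/-- `w` is an equilibrium: `Δw + P(w) = 0`. -/
def IsEquilibrium {n N : ℕ} (a : Fin N → Spc n → ℝ) (w : Spc n → ℝ) : Prop :=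
  ∀ x, lap w x + Pfun a w x = 0

/-- The energy density `|∂u/∂t|² + |Δu + P(u)|²`. -/
noncomputable def energyDensity {n N : ℕ} (a : Fin N → Spc n → ℝ) (u : ℝ × Spc n → ℝ)
    (t : ℝ) (x : Spc n) : ℝ :=
  (timeDeriv u t x) ^ 2 + (lap (fun y => u (t, y)) x + Pfun a (fun y => u (t, y)) x) ^ 2

/-- The energy `E(u) = (1/2) ∫_ℝ ∫_{ℝⁿ} (|∂u/∂t|² + |Δu + P(u)|²) dx dt`, valued in `ℝ≥0∞`. -/
noncomputable def energy {n N : ℕ} (a : Fin N → Spc n → ℝ) (u : ℝ × Spc n → ℝ) : ℝ≥0∞ :=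
  (1 / 2) * ∫⁻ t : ℝ, ∫⁻ x : Spc n, ENNReal.ofReal (energyDensity a u t x)

/-- The action density `(1/2)|∇f|² + f^{N+1}/(N+1) - ∑_{i<N} aᵢ f^{i+1}/(i+1)`. -/
noncomputable def actionDensity {n N : ℕ} (a : Fin N → Spc n → ℝ) (f : Spc n → ℝ)
    (x : Spc n) : ℝ :=
  (1 / 2) * ‖gradient f x‖ ^ 2 + f x ^ (N + 1) / (N + 1)
    - ∑ i : Fin N, a i x * f x ^ ((i : ℕ) + 1) / ((i : ℕ) + 1)

/-- The action functional `A(f)`. -/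
noncomputable def action {n N : ℕ} (a : Fin N → Spc n → ℝ) (f : Spc n → ℝ) : ℝ :=
  ∫ x : Spc n, actionDensity a f x

/-- `f` has finite action. -/
def FiniteAction {n N : ℕ} (a : Fin N → Spc n → ℝ) (f : Spc n → ℝ) : Prop :=
  Integrable (actionDensity a f)

/-- The coefficients `aᵢ` are smooth, in `L¹ ∩ L∞`, with all derivatives of all orders
bounded. -/
def GoodCoeffs {n N : ℕ} (a : Fin N → Spc n → ℝ) : Prop :=
  ∀ i, ContDiff ℝ (⊤ : ℕ∞) (a i) ∧ Integrable (a i) ∧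
    ∀ k : ℕ, ∃ C : ℝ, ∀ x, ‖iteratedFDeriv ℝ k (a i) x‖ ≤ C

/-- `u`, `∂u/∂t` and the spatial derivatives of `u` up to order two are bounded by a
constant multiple of `(1+|x|)^{-(n+1)}`, uniformly for `t` in compact intervals. -/
def AdmissibleDecay {n : ℕ} (u : ℝ × Spc n → ℝ) : Prop :=
  ∀ T > (0 : ℝ), ∃ C : ℝ, ∀ t : ℝ, ∀ x : Spc n, |t| ≤ T →
    |u (t, x)| ≤ C * (1 + ‖x‖) ^ (-(n + 1 : ℝ)) ∧
    |timeDeriv u t x| ≤ C * (1 + ‖x‖) ^ (-(n + 1 : ℝ)) ∧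
    ‖fderiv ℝ (fun y => u (t, y)) x‖ ≤ C * (1 + ‖x‖) ^ (-(n + 1 : ℝ)) ∧
    ‖iteratedFDeriv ℝ 2 (fun y => u (t, y)) x‖ ≤ C * (1 + ‖x‖) ^ (-(n + 1 : ℝ))

section DirectionalDerivatives

variable {E : Type*} [NormedAddCommGroup E] [NormedSpace ℝ E]

/-- The derivative of `f` in the constant direction `v`. -/
def dirDeriv (v : E) (f : E → ℝ) (p : E) : ℝ := fderiv ℝ f p v

lemma contDiff_dirDeriv {f : E → ℝ} (hf : ContDiff ℝ (⊤ : ℕ∞) f) (v : E) :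
    ContDiff ℝ (⊤ : ℕ∞) (dirDeriv v f) :=
  (hf.fderiv_right (m := (⊤ : ℕ∞)) (by simp)).clm_apply contDiff_const

lemma dirDeriv_comm {f : E → ℝ} (hf : ContDiff ℝ (⊤ : ℕ∞) f) (v w : E) :
    dirDeriv v (dirDeriv w f) = dirDeriv w (dirDeriv v f) := by
  have hd : Differentiable ℝ (fderiv ℝ f) :=
    (hf.fderiv_right (m := (⊤ : ℕ∞)) (by simp)).differentiable (by simp)
  have key : ∀ (p v w : E), dirDeriv v (dirDeriv w f) p = fderiv ℝ (fderiv ℝ f) p v w := by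
    intro p v w
    unfold dirDeriv
    rw [fderiv_clm_apply (hd p) (differentiableAt_const w)]
    simp
  funext p
  rw [key, key]
  exact ((contDiff_infty.mp hf 2).contDiffAt.isSymmSndFDerivAt (by simp)).eq v w

lemma hasDerivAt_slice {f : ℝ × E → ℝ} (hf : ContDiff ℝ (⊤ : ℕ∞) f) (t : ℝ) (x : E) :
    HasDerivAt (fun s => f (s, x)) (dirDeriv (1, 0) f (t, x)) t := by
  have h := ((hf.differentiable (by simp)) (t, x)).hasFDerivAt
  exact h.comp_hasDerivAt t ((hasDerivAt_id t).prodMk (hasDerivAt_const t x))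

lemma fderiv_slice_apply {f : ℝ × E → ℝ} (hf : ContDiff ℝ (⊤ : ℕ∞) f) (t : ℝ) (x v : E) :
    fderiv ℝ (fun y => f (t, y)) x v = dirDeriv (0, v) f (t, x) := by
  have h := ((hf.differentiable (by simp)) (t, x)).hasFDerivAt
  have h' := h.comp x ((hasFDerivAt_const t x).prodMk (hasFDerivAt_id x))
  have := h'.fderiv
  simp only [Function.comp_def] at this
  rw [this]
  rfl

lemma contDiff_slice {f : ℝ × E → ℝ} (hf : ContDiff ℝ (⊤ : ℕ∞) f) (t : ℝ) :
    ContDiff ℝ (⊤ : ℕ∞) (fun y => f (t, y)) :=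
  hf.comp (contDiff_const.prodMk contDiff_id)

end DirectionalDerivatives

section Integration

/-- Lebesgue measure on the slab `(S, T] × ℝⁿ`. -/
abbrev slab (n : ℕ) (S T : ℝ) : Measure (ℝ × Spc n) :=
  (volume.restrict (Set.Ioc S T)).prod volume

lemma integral_fderiv_eq_zero {n : ℕ} {g : Spc n → ℝ} (hg : ContDiff ℝ (⊤ : ℕ∞) g)
    (hc : HasCompactSupport g) (v : Spc n) : ∫ x, fderiv ℝ g x v = 0 := by
  have hg' : Continuous (fun x => fderiv ℝ g x v) := (contDiff_dirDeriv hg v).continuous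
  have h := integral_mul_fderiv_eq_neg_fderiv_mul_of_integrable (μ := (volume : Measure (Spc n)))
    (f := fun _ => (1 : ℝ)) (g := g) (v := v) (by simp)
    (by simpa using hg'.integrable_of_hasCompactSupport (hc.fderiv_apply (𝕜 := ℝ) v))
    (by simpa using hg.continuous.integrable_of_hasCompactSupport hc)
    (by simp) (fun x _ => hg.differentiable (by simp) x)
  simpa using h

lemma integrable_slab_of_compact {n : ℕ} {H : ℝ × Spc n → ℝ} (hH : Continuous H)
    {K : Set (Spc n)} (hK : IsCompact K) (hz : ∀ t, ∀ x ∉ K, H (t, x) = 0) (S T : ℝ) :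
    Integrable H (slab n S T) := by
  have h1 : IntegrableOn H (Set.Icc S T ×ˢ K) (volume.prod volume) :=
    hH.continuousOn.integrableOn_compact (isCompact_Icc.prod hK)
  have h2 : IntegrableOn H (Set.Ioc S T ×ˢ K) (volume.prod volume) :=
    h1.mono_set (Set.prod_mono Set.Ioc_subset_Icc_self subset_rfl)
  have h3 : IntegrableOn H (Set.Ioc S T ×ˢ Set.univ) (volume.prod volume) := by
    refine h2.of_forall_sdiff_eq_zero (measurableSet_Ioc.prod MeasurableSet.univ) ?_
    rintro ⟨t, x⟩ ⟨h, h'⟩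
    refine hz t x fun hx => h' ⟨h.1, hx⟩
  rw [IntegrableOn, ← Measure.prod_restrict, Measure.restrict_univ] at h3
  exact h3

lemma exists_cutoff (n : ℕ) : ∃ χ : ℕ → Spc n → ℝ,
    (∀ k, ContDiff ℝ (⊤ : ℕ∞) (χ k)) ∧ (∀ k, HasCompactSupport (χ k)) ∧
    (∀ k x, |χ k x| ≤ 1) ∧ (∃ L : ℝ, 0 ≤ L ∧ ∀ k x, ‖fderiv ℝ (χ k) x‖ ≤ L / (k + 1)) ∧
    ∀ x, Tendsto (fun k => χ k x) atTop (𝓝 1) := by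
  let f : ContDiffBump (0 : Spc n) := ⟨1, 2, one_pos, one_lt_two⟩
  have hf : ContDiff ℝ (⊤ : ℕ∞) f := f.contDiff
  obtain ⟨L, hL⟩ := (hf.continuous_fderiv (by simp)).bounded_above_of_compact_support
    (f.hasCompactSupport.fderiv (𝕜 := ℝ))
  have hk : ∀ k : ℕ, ((k : ℝ) + 1)⁻¹ ≠ 0 := fun k => by positivity
  refine ⟨fun k x => f (((k : ℝ) + 1)⁻¹ • x), fun k => ?_, fun k => ?_, fun k x => ?_,
    ⟨L, (norm_nonneg _).trans (hL 0), fun k x => ?_⟩, fun x => ?_⟩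
  · exact hf.comp (contDiff_const_smul _)
  · exact f.hasCompactSupport.comp_smul (hk k)
  · rw [abs_of_nonneg f.nonneg]
    exact f.le_one
  · rw [fderiv_comp_smul, norm_smul, Real.norm_of_nonneg (by positivity), div_eq_inv_mul]
    exact mul_le_mul_of_nonneg_left (hL _) (by positivity)
  · have h0 : Tendsto (fun k : ℕ => ((k : ℝ) + 1)⁻¹ • x) atTop (𝓝 ((0 : ℝ) • x)) := by
      simpa only [one_div] using (tendsto_one_div_add_atTop_nhds_zero_nat (𝕜 := ℝ)).smul_const x
    have h1 := (f.continuous.tendsto ((0 : ℝ) • x)).comp h0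
    have h2 : f ((0 : ℝ) • x) = 1 := by
      rw [zero_smul]
      exact f.one_of_mem_closedBall (by simp [f.rIn_pos.le])
    rwa [h2] at h1

end Integration

section Action

variable {n N : ℕ} {a : Fin N → Spc n → ℝ} {u : ℝ × Spc n → ℝ}

/-- The spatial unit vector `eᵢ`, viewed in space-time. -/
abbrev spaceDir (i : Fin n) : ℝ × Spc n := (0, EuclideanSpace.single i 1)

/-- The time direction in space-time. -/
abbrev timeDir (n : ℕ) : ℝ × Spc n := (1, 0)

lemma norm_gradient (f : Spc n → ℝ) (x : Spc n) : ‖gradient f x‖ = ‖fderiv ℝ f x‖ := by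
  rw [← toDual_gradient, LinearIsometryEquiv.norm_map]

lemma norm_gradient_sq {f : Spc n → ℝ} (x : Spc n) :
    ‖gradient f x‖ ^ 2 = ∑ i, (fderiv ℝ f x (EuclideanSpace.single i 1)) ^ 2 := by
  rw [EuclideanSpace.real_norm_sq_eq]
  refine Finset.sum_congr rfl fun i _ => ?_
  rw [← toDual_gradient (𝕜 := ℝ), InnerProductSpace.toDual_apply_apply,
    EuclideanSpace.inner_single_right]
  simp

lemma actionDensity_slice (hu : ContDiff ℝ (⊤ : ℕ∞) u) (t : ℝ) (x : Spc n) :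
    actionDensity a (fun y => u (t, y)) x =
      (1 / 2) * ∑ i, dirDeriv (spaceDir i) u (t, x) ^ 2 + u (t, x) ^ (N + 1) / (N + 1)
        - ∑ i : Fin N, a i x * u (t, x) ^ ((i : ℕ) + 1) / ((i : ℕ) + 1) := by
  simp only [actionDensity, norm_gradient_sq, fderiv_slice_apply hu]

lemma timeDeriv_eq (hu : ContDiff ℝ (⊤ : ℕ∞) u) (t : ℝ) (x : Spc n) :
    timeDeriv u t x = dirDeriv (timeDir n) u (t, x) :=
  (hasDerivAt_slice hu t x).deriv

lemma lap_slice (hu : ContDiff ℝ (⊤ : ℕ∞) u) (t : ℝ) (x : Spc n) :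
    lap (fun y => u (t, y)) x =
      ∑ i, dirDeriv (spaceDir i) (dirDeriv (spaceDir i) u) (t, x) := by
  refine Finset.sum_congr rfl fun i _ => ?_
  simp only [fderiv_slice_apply hu]
  exact fderiv_slice_apply (contDiff_dirDeriv hu (spaceDir i)) t x _

lemma contDiff_actionDensity (ha : GoodCoeffs a) (hu : ContDiff ℝ (⊤ : ℕ∞) u) :
    ContDiff ℝ (⊤ : ℕ∞)
      (fun p : ℝ × Spc n => actionDensity a (fun y => u (p.1, y)) p.2) := by
  simp only [actionDensity_slice hu]
  refine ((contDiff_const.mul (ContDiff.sum fun i _ =>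
    (contDiff_dirDeriv hu (spaceDir i)).pow 2)).add ((hu.pow _).div_const _)).sub
      (ContDiff.sum fun i _ => ((((ha i).1.comp contDiff_snd).mul (hu.pow _)).div_const _))

/-- The time derivative of the action density along `u`. -/
def actionDensityRate (a : Fin N → Spc n → ℝ) (u : ℝ × Spc n → ℝ) (p : ℝ × Spc n) : ℝ :=
  ∑ i, dirDeriv (spaceDir i) u p * dirDeriv (spaceDir i) (dirDeriv (timeDir n) u) p
    - Pfun a (fun y => u (p.1, y)) p.2 * dirDeriv (timeDir n) u p

lemma hasDerivAt_actionDensity (hu : ContDiff ℝ (⊤ : ℕ∞) u) (t : ℝ) (x : Spc n) :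
    HasDerivAt (fun s => actionDensity a (fun y => u (s, y)) x)
      (actionDensityRate a u (t, x)) t := by
  simp only [actionDensity_slice hu]
  have h0 := hasDerivAt_slice hu t x
  have h1 : ∀ i : Fin n, HasDerivAt (fun s => dirDeriv (spaceDir i) u (s, x))
      (dirDeriv (spaceDir i) (dirDeriv (timeDir n) u) (t, x)) t := by
    intro i
    rw [dirDeriv_comm hu]
    exact hasDerivAt_slice (contDiff_dirDeriv hu (spaceDir i)) t x
  have h := (((HasDerivAt.fun_sum fun i (_ : i ∈ Finset.univ) => (h1 i).pow 2).const_mul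
    (1 / 2 : ℝ)).add ((h0.pow (N + 1)).div_const ((N : ℝ) + 1))).sub
      (HasDerivAt.fun_sum fun (i : Fin N) (_ : i ∈ Finset.univ) =>
        ((h0.pow ((i : ℕ) + 1)).const_mul (a i x)).div_const (((i : ℕ) : ℝ) + 1))
  refine h.congr_deriv ?_
  have hN : (N : ℝ) + 1 ≠ 0 := by positivity
  simp only [actionDensityRate, Pfun, Finset.mul_sum, add_mul, Finset.sum_mul, sub_eq_add_neg,
    neg_add, neg_mul, neg_neg, add_assoc, Nat.add_sub_cancel]
  congr 1
  · refine Finset.sum_congr rfl fun i _ => ?_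
    push_cast
    ring
  congr 1
  · push_cast
    field_simp
  · congr 1
    refine Finset.sum_congr rfl fun i _ => ?_
    have hi : ((i : ℕ) : ℝ) + 1 ≠ 0 := by positivity
    push_cast
    field_simp

/-- The space-time density left over after integrating by parts against the cutoff `χ`. -/
def cutoffDissipation (u : ℝ × Spc n → ℝ) (χ : Spc n → ℝ) (p : ℝ × Spc n) : ℝ :=
  χ p.2 * dirDeriv (timeDir n) u p ^ 2
    + dirDeriv (timeDir n) u p *
      ∑ i, fderiv ℝ χ p.2 (EuclideanSpace.single i 1) * dirDeriv (spaceDir i) u p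

lemma continuous_cutoffDissipation (hu : ContDiff ℝ (⊤ : ℕ∞) u) {χ : Spc n → ℝ}
    (hχ : ContDiff ℝ (⊤ : ℕ∞) χ) : Continuous (cutoffDissipation u χ) := by
  have h1 := (contDiff_dirDeriv hu (timeDir n)).continuous
  have h2 := fun i : Fin n => (contDiff_dirDeriv hu (spaceDir i)).continuous
  have h3 : ∀ i : Fin n, Continuous fun p : ℝ × Spc n =>
      fderiv ℝ χ p.2 (EuclideanSpace.single i 1) := fun i =>
    (contDiff_dirDeriv hχ (EuclideanSpace.single i 1)).continuous.comp continuous_snd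
  have h4 := hχ.continuous
  unfold cutoffDissipation
  fun_prop

lemma continuous_actionDensityRate (ha : GoodCoeffs a) (hu : ContDiff ℝ (⊤ : ℕ∞) u) :
    Continuous (actionDensityRate a u) := by
  have h0 := hu.continuous
  have h1 := (contDiff_dirDeriv hu (timeDir n)).continuous
  have h2 := fun i : Fin n => (contDiff_dirDeriv hu (spaceDir i)).continuous
  have h3 := fun i : Fin n =>
    (contDiff_dirDeriv (contDiff_dirDeriv hu (timeDir n)) (spaceDir i)).continuous
  have h4 := fun i => (ha i).1.continuous
  unfold actionDensityRate Pfun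
  fun_prop

lemma integral_rate_add_dissipation (hu : ContDiff ℝ (⊤ : ℕ∞) u)
    (hsol : IsSol a u) {χ : Spc n → ℝ} (hχ : ContDiff ℝ (⊤ : ℕ∞) χ) (hc : HasCompactSupport χ)
    (t : ℝ) :
    ∫ x, (χ x * actionDensityRate a u (t, x) + cutoffDissipation u χ (t, x)) = 0 := by
  let g : Fin n → Spc n → ℝ := fun i x =>
    χ x * dirDeriv (spaceDir i) u (t, x) * dirDeriv (timeDir n) u (t, x)
  have hxs := fun i : Fin n => contDiff_slice (contDiff_dirDeriv hu (spaceDir i)) t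
  have hts := contDiff_slice (contDiff_dirDeriv hu (timeDir n)) t
  have hg : ∀ i, ContDiff ℝ (⊤ : ℕ∞) (g i) := fun i => (hχ.mul (hxs i)).mul hts
  have hgc : ∀ i, HasCompactSupport (g i) := fun i => (hc.mul_right).mul_right
  have key : ∀ x, χ x * actionDensityRate a u (t, x) + cutoffDissipation u χ (t, x) =
      ∑ i, fderiv ℝ (g i) x (EuclideanSpace.single i 1) := by
    intro x
    have hd : ∀ i, fderiv ℝ (g i) x (EuclideanSpace.single i 1) =
        χ x * (dirDeriv (spaceDir i) u (t, x)
            * dirDeriv (spaceDir i) (dirDeriv (timeDir n) u) (t, x))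
          + (fderiv ℝ χ x (EuclideanSpace.single i 1) * dirDeriv (spaceDir i) u (t, x))
            * dirDeriv (timeDir n) u (t, x)
          + χ x * dirDeriv (timeDir n) u (t, x)
            * dirDeriv (spaceDir i) (dirDeriv (spaceDir i) u) (t, x) := by
      intro i
      have e1 : DifferentiableAt ℝ χ x := hχ.differentiable (by simp) x
      have e2 := (hxs i).differentiable (by simp) x
      have e3 := hts.differentiable (by simp) x
      simp only [g]
      rw [fderiv_fun_mul (e1.fun_mul e2) e3, fderiv_fun_mul e1 e2]
      simp only [add_apply, smul_apply, smul_eq_mul,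
        fderiv_slice_apply (contDiff_dirDeriv hu (spaceDir i)),
        fderiv_slice_apply (contDiff_dirDeriv hu (timeDir n))]
      ring
    have hs := hsol t x
    rw [timeDeriv_eq hu, lap_slice hu] at hs
    simp only [hd, Finset.sum_add_distrib, ← Finset.mul_sum, ← Finset.sum_mul,
      actionDensityRate, cutoffDissipation]
    rw [← sub_eq_iff_eq_add.mpr hs]
    ring
  simp only [key]
  rw [integral_finsetSum]
  · exact Finset.sum_eq_zero fun i _ => integral_fderiv_eq_zero (hg i) (hgc i) _
  · intro i _
    exact (contDiff_dirDeriv (hg i) _).continuous.integrable_of_hasCompactSupport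
      ((hgc i).fderiv_apply (𝕜 := ℝ) _)

lemma integral_cutoff_actionDensity_sub (ha : GoodCoeffs a) (hu : ContDiff ℝ (⊤ : ℕ∞) u)
    (hsol : IsSol a u) {χ : Spc n → ℝ} (hχ : ContDiff ℝ (⊤ : ℕ∞) χ) (hc : HasCompactSupport χ)
    {S T : ℝ} (hST : S ≤ T) :
    ∫ x, χ x * (actionDensity a (fun y => u (T, y)) x - actionDensity a (fun y => u (S, y)) x) =
      -∫ p, cutoffDissipation u χ p ∂(slab n S T) := by
  have hR := continuous_actionDensityRate ha hu
  have hD := continuous_cutoffDissipation hu hχ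
  have hχR : Continuous fun p : ℝ × Spc n => χ p.2 * actionDensityRate a u p :=
    (hχ.continuous.comp continuous_snd).mul hR
  have hz : ∀ x ∉ tsupport χ, χ x = 0 := fun x hx => image_eq_zero_of_notMem_tsupport hx
  have hz' : ∀ x ∉ tsupport χ, fderiv ℝ χ x = 0 := fun x hx =>
    image_eq_zero_of_notMem_tsupport fun h => hx (tsupport_fderiv_subset ℝ h)
  have iR : Integrable (fun p : ℝ × Spc n => χ p.2 * actionDensityRate a u p) (slab n S T) :=
    integrable_slab_of_compact hχR hc (fun t x hx => by simp [hz x hx]) S T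
  have iD : Integrable (cutoffDissipation u χ) (slab n S T) :=
    integrable_slab_of_compact hD hc
      (fun t x hx => by simp [cutoffDissipation, hz x hx, hz' x hx]) S T
  have ftc : ∀ x, χ x * (actionDensity a (fun y => u (T, y)) x
      - actionDensity a (fun y => u (S, y)) x) =
      ∫ t in Set.Ioc S T, χ x * actionDensityRate a u (t, x) := by
    intro x
    rw [integral_const_mul, ← intervalIntegral.integral_of_le hST,
      intervalIntegral.integral_eq_sub_of_hasDerivAt
        (fun t _ => hasDerivAt_actionDensity hu t x)]
    exact (hR.comp (by fun_prop : Continuous fun t : ℝ => (t, x))).intervalIntegrable _ _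
  simp only [ftc]
  rw [eq_neg_iff_add_eq_zero, ← integral_prod_symm _ iR, ← integral_add iR iD]
  refine (integral_prod _ (iR.add iD)).trans ?_
  simp only [Pi.add_apply, integral_rate_add_dissipation hu hsol hχ hc, integral_zero]

end Action

section Decay

variable {n N : ℕ} {a : Fin N → Spc n → ℝ} {u : ℝ × Spc n → ℝ}

/-- The weight `(1+|x|)^{-(n+1)}`. -/
def decayWeight {n : ℕ} (x : Spc n) : ℝ := (1 + ‖x‖) ^ (-(n + 1 : ℝ))

lemma decayWeight_nonneg (x : Spc n) : 0 ≤ decayWeight x :=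
  Real.rpow_nonneg (by positivity) _

lemma decayWeight_le_one (x : Spc n) : decayWeight x ≤ 1 :=
  Real.rpow_le_one_of_one_le_of_nonpos (by linarith [norm_nonneg x])
    (by linarith [n.cast_nonneg (α := ℝ)])

lemma integrable_decayWeight (n : ℕ) : Integrable (decayWeight (n := n)) :=
  integrable_one_add_norm (by simp)

lemma mul_decayWeight_pow_le {C y : ℝ} {x : Spc n} (hC : 0 ≤ C) (hy : |y| ≤ C * decayWeight x)
    (m : ℕ) : |y ^ (m + 1)| ≤ C ^ (m + 1) * decayWeight x := by
  rw [abs_pow]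
  calc |y| ^ (m + 1) ≤ (C * decayWeight x) ^ (m + 1) := by gcongr
    _ = C ^ (m + 1) * decayWeight x ^ (m + 1) := mul_pow _ _ _
    _ ≤ C ^ (m + 1) * decayWeight x := by
      gcongr
      exact pow_le_of_le_one (decayWeight_nonneg x) (decayWeight_le_one x) (by simp)

lemma integrable_pow_of_decay {C : ℝ} {f : Spc n → ℝ} (hC : 0 ≤ C) (hf : Continuous f)
    (hb : ∀ x, |f x| ≤ C * decayWeight x) (m : ℕ) : Integrable (fun x => f x ^ (m + 1)) :=
  ((integrable_decayWeight n).const_mul (C ^ (m + 1))).mono'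
    (hf.pow _).aestronglyMeasurable
    (ae_of_all _ fun x => mul_decayWeight_pow_le hC (hb x) m)

lemma AdmissibleDecay.exists_bound (hdec : AdmissibleDecay u) (S T : ℝ) :
    ∃ C : ℝ, 0 ≤ C ∧ ∀ t ∈ Set.Icc S T, ∀ x : Spc n,
      |u (t, x)| ≤ C * decayWeight x ∧ |timeDeriv u t x| ≤ C * decayWeight x ∧
      ‖fderiv ℝ (fun y => u (t, y)) x‖ ≤ C * decayWeight x := by
  obtain ⟨C, hC⟩ := hdec (|S| + |T| + 1) (by positivity)
  refine ⟨max C 0, le_max_right _ _, fun t ht x => ?_⟩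
  have hw : C * decayWeight x ≤ max C 0 * decayWeight x :=
    mul_le_mul_of_nonneg_right (le_max_left _ _) (decayWeight_nonneg x)
  have hT : |t| ≤ |S| + |T| + 1 := by
    rw [abs_le]
    constructor <;> linarith [ht.1, ht.2, neg_abs_le S, le_abs_self T, abs_nonneg S, abs_nonneg T]
  obtain ⟨h1, h2, h3, -⟩ := hC t x hT
  exact ⟨h1.trans hw, h2.trans hw, h3.trans hw⟩

lemma integrable_actionDensity (ha : GoodCoeffs a) {f : Spc n → ℝ}
    (hf : ContDiff ℝ (⊤ : ℕ∞) f) {C : ℝ} (hC : 0 ≤ C) (hb : ∀ x, |f x| ≤ C * decayWeight x)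
    (hb' : ∀ x, ‖fderiv ℝ f x‖ ≤ C * decayWeight x) : Integrable (actionDensity a f) := by
  unfold actionDensity
  simp only [norm_gradient]
  have hpow := integrable_pow_of_decay hC hf.continuous hb
  refine (((integrable_pow_of_decay hC (hf.continuous_fderiv (by simp)).norm
    (fun x => by simpa using hb' x) 1).const_mul _).add ((hpow N).div_const _)).sub
    (integrable_finsetSum _ fun i _ => Integrable.div_const ?_ _)
  obtain ⟨-, -, hbd⟩ := ha i
  obtain ⟨M, hM⟩ := hbd 0
  exact (hpow i).bdd_mul (ha i).1.continuous.aestronglyMeasurable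
    (ae_of_all _ fun x => by simpa using hM x)

lemma abs_cutoffDissipation_le (hu : ContDiff ℝ (⊤ : ℕ∞) u) {χ : Spc n → ℝ} {C L t : ℝ}
    {x : Spc n} (hC : 0 ≤ C) (hL : 0 ≤ L) (hχ : |χ x| ≤ 1) (hχ' : ‖fderiv ℝ χ x‖ ≤ L)
    (ht : |timeDeriv u t x| ≤ C * decayWeight x)
    (hx : ‖fderiv ℝ (fun y => u (t, y)) x‖ ≤ C * decayWeight x) :
    |cutoffDissipation u χ (t, x)| ≤ (C ^ 2 * (1 + n * L)) * decayWeight x := by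
  rw [timeDeriv_eq hu] at ht
  have hw := decayWeight_nonneg x
  have hdir : ∀ (f : Spc n → ℝ) (i : Fin n),
      |fderiv ℝ f x (EuclideanSpace.single i 1)| ≤ ‖fderiv ℝ f x‖ := fun f i => by
    simpa using (fderiv ℝ f x).le_opNorm (EuclideanSpace.single i 1)
  have hsum : |∑ i, fderiv ℝ χ x (EuclideanSpace.single i 1) * dirDeriv (spaceDir i) u (t, x)|
      ≤ n * (L * (C * decayWeight x)) := by
    refine (Finset.abs_sum_le_sum_abs _ _).trans ?_
    refine (Finset.sum_le_card_nsmul _ _ (L * (C * decayWeight x)) fun i _ => ?_).trans_eq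
      (by simp)
    rw [abs_mul, ← fderiv_slice_apply hu]
    exact mul_le_mul ((hdir _ i).trans hχ') ((hdir _ i).trans hx) (abs_nonneg _) hL
  have hw2 : decayWeight x ^ 2 ≤ decayWeight x :=
    pow_le_of_le_one hw (decayWeight_le_one x) (by simp)
  simp only [cutoffDissipation]
  calc _ ≤ _ := abs_add_le _ _
    _ ≤ 1 * (C * decayWeight x) ^ 2 + (C * decayWeight x) * (n * (L * (C * decayWeight x))) := by
      rw [abs_mul, abs_mul, abs_pow]
      gcongr
    _ = (C ^ 2 * (1 + n * L)) * decayWeight x ^ 2 := by ring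
    _ ≤ _ := by gcongr

lemma tendsto_cutoffDissipation {χ : ℕ → Spc n → ℝ} {L : ℝ}
    (hχ' : ∀ k x, ‖fderiv ℝ (χ k) x‖ ≤ L / (k + 1))
    (hχ : ∀ x, Tendsto (fun k => χ k x) atTop (𝓝 1)) (p : ℝ × Spc n) :
    Tendsto (fun k => cutoffDissipation u (χ k) p) atTop (𝓝 (dirDeriv (timeDir n) u p ^ 2)) := by
  have h0 : Tendsto (fun k => fderiv ℝ (χ k) p.2) atTop (𝓝 0) := by
    refine squeeze_zero_norm (fun k => hχ' k p.2) ?_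
    simpa [div_eq_mul_inv] using
      (tendsto_one_div_add_atTop_nhds_zero_nat (𝕜 := ℝ)).const_mul L
  have h1 : ∀ v, Tendsto (fun k => fderiv ℝ (χ k) p.2 v) atTop (𝓝 0) := fun v =>
    ((ContinuousLinearMap.apply ℝ ℝ v).continuous.tendsto 0).comp h0
  have h2 := ((hχ p.2).mul_const (dirDeriv (timeDir n) u p ^ 2)).add
    ((tendsto_finsetSum Finset.univ fun i _ => (h1 (EuclideanSpace.single i 1)).mul_const
      (dirDeriv (spaceDir i) u p)).const_mul (dirDeriv (timeDir n) u p))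
  simpa [cutoffDissipation] using h2

lemma ae_slab {P : ℝ × Spc n → Prop} {S T : ℝ} (h : ∀ t ∈ Set.Icc S T, ∀ x, P (t, x)) :
    ∀ᵐ p ∂(slab n S T), P p := by
  have hs : slab n S T = (volume.prod volume).restrict (Set.Ioc S T ×ˢ Set.univ) := by
    rw [← Measure.prod_restrict, Measure.restrict_univ]
  rw [hs]
  exact (ae_restrict_mem (measurableSet_Ioc.prod MeasurableSet.univ)).mono
    fun p hp => h p.1 (Set.Ioc_subset_Icc_self hp.1) p.2

lemma integrable_slab_decayWeight (S T : ℝ) :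
    Integrable (fun p : ℝ × Spc n => decayWeight p.2) (slab n S T) :=
  (integrable_decayWeight n).comp_snd _

lemma integrable_sq_timeDeriv (hu : ContDiff ℝ (⊤ : ℕ∞) u) (hdec : AdmissibleDecay u)
    (S T : ℝ) : Integrable (fun p => dirDeriv (timeDir n) u p ^ 2) (slab n S T) := by
  obtain ⟨C, hC, hb⟩ := hdec.exists_bound S T
  refine ((integrable_slab_decayWeight S T).const_mul (C ^ 2)).mono'
    ((contDiff_dirDeriv hu _).continuous.pow 2).aestronglyMeasurable
    (ae_slab fun t ht x => ?_)
  have h := (hb t ht x).2.1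
  rw [timeDeriv_eq hu] at h
  exact mul_decayWeight_pow_le hC h 1

/-- The action decreases along the flow at the rate `∫ |∂u/∂t|²`. -/
lemma action_sub_action (ha : GoodCoeffs a) (hu : ContDiff ℝ (⊤ : ℕ∞) u)
    (hdec : AdmissibleDecay u) (hsol : IsSol a u) {S T : ℝ} (hST : S ≤ T) :
    action a (fun x => u (S, x)) - action a (fun x => u (T, x)) =
      ∫ p, dirDeriv (timeDir n) u p ^ 2 ∂(slab n S T) := by
  obtain ⟨C, hC, hb⟩ := hdec.exists_bound S T
  obtain ⟨χ, hχs, hχc, hχ1, ⟨L, hL, hχL⟩, hχt⟩ := exists_cutoff n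
  have hint : ∀ t ∈ Set.Icc S T, Integrable (actionDensity a (fun x => u (t, x))) := fun t ht =>
    integrable_actionDensity ha (contDiff_slice hu t) hC (fun x => (hb t ht x).1)
      (fun x => (hb t ht x).2.2)
  have iS := hint S ⟨le_rfl, hST⟩
  have iT := hint T ⟨hST, le_rfl⟩
  have lim1 : Tendsto (fun k => ∫ x, χ k x * (actionDensity a (fun y => u (T, y)) x
      - actionDensity a (fun y => u (S, y)) x)) atTop
      (𝓝 (∫ x, (actionDensity a (fun y => u (T, y)) x
        - actionDensity a (fun y => u (S, y)) x))) := by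
    refine tendsto_integral_of_dominated_convergence _
      (fun k => (hχs k).continuous.aestronglyMeasurable.mul (iT.sub iS).aestronglyMeasurable)
      (iT.sub iS).norm (fun k => ae_of_all _ fun x => ?_) (ae_of_all _ fun x => ?_)
    · rw [norm_mul]
      exact mul_le_of_le_one_left (norm_nonneg _) (hχ1 k x)
    · simpa using (hχt x).mul_const (actionDensity a (fun y => u (T, y)) x
        - actionDensity a (fun y => u (S, y)) x)
  have lim2 : Tendsto (fun k => ∫ p, cutoffDissipation u (χ k) p ∂(slab n S T)) atTop
      (𝓝 (∫ p, dirDeriv (timeDir n) u p ^ 2 ∂(slab n S T))) := by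
    refine tendsto_integral_of_dominated_convergence
      (fun p => (C ^ 2 * (1 + n * L)) * decayWeight p.2)
      (fun k => (continuous_cutoffDissipation hu (hχs k)).aestronglyMeasurable)
      ((integrable_slab_decayWeight S T).const_mul _) (fun k => ae_slab fun t ht x => ?_)
      (ae_of_all _ fun p => tendsto_cutoffDissipation hχL hχt p)
    exact abs_cutoffDissipation_le hu hC hL (hχ1 k x)
      ((hχL k x).trans (div_le_self hL (by simp))) (hb t ht x).2.1 (hb t ht x).2.2
  simp only [integral_cutoff_actionDensity_sub ha hu hsol (hχs _) (hχc _) hST] at lim1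
  have h := tendsto_nhds_unique lim1 lim2.neg
  rw [integral_sub iT iS] at h
  simp only [action]
  linarith

lemma lintegral_slab_sq_timeDeriv (ha : GoodCoeffs a) (hu : ContDiff ℝ (⊤ : ℕ∞) u)
    (hdec : AdmissibleDecay u) (hsol : IsSol a u) {S T : ℝ} (hST : S ≤ T) :
    ∫⁻ t in Set.Ioc S T, ∫⁻ x, ENNReal.ofReal (dirDeriv (timeDir n) u (t, x) ^ 2) =
      ENNReal.ofReal (action a (fun x => u (S, x)) - action a (fun x => u (T, x))) := by
  have hi := integrable_sq_timeDeriv hu hdec S T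
  rw [action_sub_action ha hu hdec hsol hST,
    ofReal_integral_eq_lintegral_ofReal hi (ae_of_all _ fun p => sq_nonneg _),
    lintegral_prod _ hi.aestronglyMeasurable.aemeasurable.ennreal_ofReal]

lemma energy_eq_lintegral_sq_timeDeriv (hu : ContDiff ℝ (⊤ : ℕ∞) u) (hsol : IsSol a u) :
    energy a u = ∫⁻ t : ℝ, ∫⁻ x : Spc n,
      ENNReal.ofReal (dirDeriv (timeDir n) u (t, x) ^ 2) := by
  have h : ∀ t x, ENNReal.ofReal (energyDensity a u t x) =
      2 * ENNReal.ofReal (dirDeriv (timeDir n) u (t, x) ^ 2) := fun t x => by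
    rw [energyDensity, ← hsol t x, timeDeriv_eq hu, ← two_mul,
      ENNReal.ofReal_mul zero_le_two, ENNReal.ofReal_ofNat]
  simp only [energy, h]
  simp_rw [lintegral_const_mul' 2 _ ENNReal.ofNat_ne_top]
  rw [← mul_assoc, one_div, ENNReal.inv_mul_cancel two_ne_zero ENNReal.ofNat_ne_top, one_mul]

end Decay

/-- If `u` is a smooth solution of the PDE with admissible decay and the
action along the solution converges to `α₋` as `t → -∞` and to `α₊` as `t → +∞`, then the
energy of `u` equals the difference of the limiting actions: `E(u) = α₋ - α₊`. -/
theorem energy_eq_action_difference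
    {n N : ℕ} (hn : 1 ≤ n) (hN : 2 ≤ N)
    (a : Fin N → Spc n → ℝ) (ha : GoodCoeffs a)
    (u : ℝ × Spc n → ℝ) (hu : ContDiff ℝ (⊤ : ℕ∞) u) (hdec : AdmissibleDecay u)
    (hsol : IsSol a u)
    (αm αp : ℝ)
    (hm : Tendsto (fun t : ℝ => action a (fun x => u (t, x))) atBot (nhds αm))
    (hp : Tendsto (fun t : ℝ => action a (fun x => u (t, x))) atTop (nhds αp)) :
    energy a u = ENNReal.ofReal (αm - αp) := by
  rw [energy_eq_lintegral_sq_timeDeriv hu hsol]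
  have hcover : AECover (volume : Measure ℝ) atTop (fun r : ℝ => Set.Ioc (-r) r) :=
    aecover_Ioc tendsto_neg_atTop_atBot tendsto_id
  have hmeas : Measurable fun t : ℝ =>
      ∫⁻ x : Spc n, ENNReal.ofReal (dirDeriv (timeDir n) u (t, x) ^ 2) :=
    ((contDiff_dirDeriv hu (timeDir n)).continuous.measurable.pow_const 2).ennreal_ofReal
      |>.lintegral_prod_right'
  refine hcover.lintegral_eq_of_tendsto _ hmeas.aemeasurable ?_
  refine (ENNReal.tendsto_ofReal ((hm.comp tendsto_neg_atTop_atBot).sub hp)).congr' ?_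
  filter_upwards [eventually_ge_atTop (0 : ℝ)] with r hr
  exact (lintegral_slab_sq_timeDeriv ha hu hdec hsol (by linarith)).symm

end
end

section
/- Let n = 1 and let N ≥ 2 be even. Let a₀, …, a_{N−1} : ℝ → ℝ be bounded. If w : ℝ → ℝ is twice differentiable and solves the equilibrium equation w''(x) + P(w)(x) = 0, i.e. w''(x) = w(x)^N − Σ_{i=0}^{N−1} aᵢ(x) w(x)ⁱ, for all x ∈ ℝ, then w is bounded from below: there exists c ∈ ℝ with w(x) ≥ c for all x. -/
open MeasureTheory Filter Topology

noncomputable section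

/-- If `w'' ≥ δ` on an interval, then `w` minus the parabola of second derivative `δ` is convex. -/
theorem convexOn_sub_parabola {w w₁ w₂ : ℝ → ℝ} (h₁ : ∀ x, HasDerivAt w (w₁ x) x)
    (h₂ : ∀ x, HasDerivAt w₁ (w₂ x) x) {δ a b : ℝ} (hδ : ∀ x ∈ Set.Icc a b, δ ≤ w₂ x) (c : ℝ) :
    ConvexOn ℝ (Set.Icc a b) (fun y => w y - δ / 2 * (y - c) ^ 2) := by
  have d₁ : ∀ y, HasDerivAt (fun y => w y - δ / 2 * (y - c) ^ 2) (w₁ y - δ * (y - c)) y := by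
    intro y
    have := (h₁ y).sub ((((hasDerivAt_id y).sub_const c).pow 2).const_mul (δ / 2))
    refine this.congr_deriv ?_
    simp only [id]
    push_cast
    ring
  have d₂ : ∀ y, HasDerivAt (fun y => w₁ y - δ * (y - c)) (w₂ y - δ) y := by
    intro y
    exact ((h₂ y).sub (((hasDerivAt_id y).sub_const c).const_mul δ)).congr_deriv (by ring)
  exact convexOn_of_hasDerivWithinAt2_nonneg (convex_Icc a b)
    (fun y _ => (d₁ y).continuousAt.continuousWithinAt)
    (fun y _ => (d₁ y).hasDerivWithinAt) (fun y _ => (d₂ y).hasDerivWithinAt)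
    (fun y hy => sub_nonneg.2 (hδ y (interior_subset hy)))

/-- The second derivative is nonpositive at a local maximum. -/
theorem IsLocalMax.second_deriv_nonpos {f f₁ : ℝ → ℝ} {x d : ℝ} (hmax : IsLocalMax f x)
    (h₁ : ∀ y, HasDerivAt f (f₁ y) y) (h₂ : HasDerivAt f₁ d x) : d ≤ 0 := by
  by_contra! hd
  have hf : deriv f = f₁ := funext fun y => (h₁ y).deriv
  have hmin : IsLocalMin f x := by
    apply isLocalMin_of_deriv_deriv_pos
    · rw [hf, h₂.deriv]
      exact hd
    · exact hmax.deriv_eq_zero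
    · exact (h₁ x).continuousAt
  have hconst : f =ᶠ[𝓝 x] fun _ => f x := by
    filter_upwards [hmax, hmin] with y hy hy'
    exact le_antisymm hy hy'
  have hzero : f₁ =ᶠ[𝓝 x] fun _ => 0 := by
    have := hconst.deriv
    rw [hf] at this
    simpa using this
  have := hzero.deriv_eq
  rw [h₂.deriv] at this
  simp at this
  linarith

/-- Solutions of `w'' ≥ w² / 2 - D` on the line are bounded above (a Keller–Osserman bound). -/
theorem le_of_sq_sub_le_second_deriv {w w₁ w₂ : ℝ → ℝ} (h₁ : ∀ x, HasDerivAt w (w₁ x) x)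
    (h₂ : ∀ x, HasDerivAt w₁ (w₂ x) x) {D : ℝ} (hD : 0 ≤ D)
    (hw : ∀ x, w x ^ 2 / 2 - D ≤ w₂ x) (c : ℝ) : w c ≤ 49 + 2 * D := by
  by_contra! hc
  set G : ℝ → ℝ := fun y => w y * (1 - (y - c) ^ 2) ^ 2 with hG
  set G₁ : ℝ → ℝ := fun y =>
    w₁ y * (1 - (y - c) ^ 2) ^ 2 + w y * (-4 * (y - c) * (1 - (y - c) ^ 2)) with hG₁
  have q₁ : ∀ y, HasDerivAt (fun y => 1 - (y - c) ^ 2) (-2 * (y - c)) y := by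
    intro y
    have := (((hasDerivAt_id y).sub_const c).pow 2).const_sub 1
    refine this.congr_deriv ?_
    simp only [id]
    push_cast
    ring
  have q₂ : ∀ y, HasDerivAt (fun y => (1 - (y - c) ^ 2) ^ 2)
      (-4 * (y - c) * (1 - (y - c) ^ 2)) y := by
    intro y
    refine ((q₁ y).pow 2).congr_deriv ?_
    push_cast
    ring
  have q₃ : ∀ y, HasDerivAt (fun y => -4 * (y - c) * (1 - (y - c) ^ 2))
      (12 * (y - c) ^ 2 - 4) y := by
    intro y
    refine ((((hasDerivAt_id y).sub_const c).const_mul (-4)).mul (q₁ y)).congr_deriv ?_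
    simp only [id]
    ring
  have d₁ : ∀ y, HasDerivAt G (G₁ y) y := fun y => (h₁ y).mul (q₂ y)
  obtain ⟨y, hy, hymax⟩ := (isCompact_Icc (a := c - 1) (b := c + 1)).exists_isMaxOn
    (Set.nonempty_Icc.2 (by linarith)) (fun y _ => (d₁ y).continuousAt.continuousWithinAt)
  have hGc : w c ≤ G y := by
    have := hymax (show c ∈ Set.Icc (c - 1) (c + 1) by constructor <;> linarith)
    simpa [hG] using this
  have hy₁ : y ≠ c - 1 := by
    rintro rfl
    have : G (c - 1) = 0 := by simp [hG]
    linarith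
  have hy₂ : y ≠ c + 1 := by
    rintro rfl
    have : G (c + 1) = 0 := by simp [hG]
    linarith
  have hlt₁ : c - 1 < y := lt_of_le_of_ne hy.1 hy₁.symm
  have hlt₂ : y < c + 1 := lt_of_le_of_ne hy.2 hy₂
  have hloc : IsLocalMax G y := hymax.isLocalMax (Icc_mem_nhds hlt₁ hlt₂)
  have d₂ := ((h₂ y).mul (q₂ y)).add ((h₁ y).mul (q₃ y))
  have hsecond := hloc.second_deriv_nonpos d₁ d₂
  have hfirst : G₁ y = 0 := by
    rw [← (d₁ y).deriv]
    exact hloc.deriv_eq_zero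
  simp only [hG₁] at hfirst
  simp only [hG] at hGc
  have hwy := hw y
  set s := y - c with hs
  have hs2 : s ^ 2 < 1 := by nlinarith
  set q := 1 - s ^ 2 with hq
  have hq0 : 0 < q := by linarith
  have hq1 : q ≤ 1 := by nlinarith [sq_nonneg s]
  have hw0 : 0 < w y := by
    by_contra! h
    nlinarith [mul_nonneg (neg_nonneg.2 h) (sq_nonneg q)]
  have hfirst' : w₁ y * q = 4 * s * w y := by
    have : q * (w₁ y * q - 4 * s * w y) = 0 := by linarith
    rcases mul_eq_zero.1 this with h | h <;> linarith
  have e₁ : w₂ y * q ^ 2 ≤ 24 * w y := by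
    have : w₁ y * (-4 * s * q) = -16 * s ^ 2 * w y := by linear_combination (-4 * s) * hfirst'
    nlinarith
  have e₂ : (w y ^ 2 / 2 - D) * q ^ 2 ≤ 24 * w y :=
    (mul_le_mul_of_nonneg_right hwy (sq_nonneg q)).trans e₁
  set m := w y * q ^ 2 with hm
  have e₃ : m ^ 2 / 2 - D * q ^ 4 ≤ 24 * m := by
    have := mul_le_mul_of_nonneg_right e₂ (sq_nonneg q)
    rw [hm]
    linarith
  have e₄ : D * q ^ 4 ≤ D := mul_le_of_le_one_right hD (pow_le_one₀ hq0.le hq1)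
  nlinarith

/-- Solutions of `w'' ≥ w² / 2 - D` on the line are bounded below. -/
theorem exists_le_of_sq_sub_le_second_deriv {w w₁ w₂ : ℝ → ℝ} (h₁ : ∀ x, HasDerivAt w (w₁ x) x)
    (h₂ : ∀ x, HasDerivAt w₁ (w₂ x) x) {D : ℝ} (hD : 0 ≤ D)
    (hw : ∀ x, w x ^ 2 / 2 - D ≤ w₂ x) : ∃ c, ∀ x, c ≤ w x := by
  set K := 49 + 2 * D with hK
  have hup : ∀ x, w x ≤ K := le_of_sq_sub_le_second_deriv h₁ h₂ hD hw
  refine ⟨-(257 + 256 * K + 32 * D), fun x => ?_⟩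
  by_contra! hx
  have hconv := convexOn_sub_parabola h₁ h₂ (δ := -D) (a := x - 1) (b := x + 1)
    (fun y _ => by nlinarith [hw y, sq_nonneg (w y)]) x
  have mx : x ∈ Set.Icc (x - 1) (x + 1) := by constructor <;> linarith
  have ml : x - 1 ∈ Set.Icc (x - 1) (x + 1) := by constructor <;> linarith
  have mr : x + 1 ∈ Set.Icc (x - 1) (x + 1) := by constructor <;> linarith
  have hsmall : ∀ y ∈ Set.Icc (x - 1 / 2) (x + 1 / 2), w y ≤ w x / 4 := by
    intro y hy
    have hy₁ := hy.1
    have hy₂ := hy.2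
    have hsq : 0 ≤ D * (y - x) ^ 2 := by positivity
    rcases le_total x y with h | h
    · have := (hconv.2) mx mr (a := 1 - (y - x)) (b := y - x) (by linarith) (by linarith) (by ring)
      simp only [smul_eq_mul] at this
      rw [show (1 - (y - x)) * x + (y - x) * (x + 1) = y by ring] at this
      have := hup (x + 1)
      nlinarith
    · have := (hconv.2) mx ml (a := 1 - (x - y)) (b := x - y) (by linarith) (by linarith) (by ring)
      simp only [smul_eq_mul] at this
      rw [show (1 - (x - y)) * x + (x - y) * (x - 1) = y by ring] at this
      have := hup (x - 1)
      nlinarith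
  have hconv' := convexOn_sub_parabola h₁ h₂ (δ := w x ^ 2 / 32 - D) (a := x - 1 / 2)
    (b := x + 1 / 2) (fun y hy => by nlinarith [hw y, hsmall y hy]) x
  have := (hconv'.2) (x := x - 1 / 2) (y := x + 1 / 2) (by constructor <;> linarith)
    (by constructor <;> linarith) (a := 1 / 2) (b := 1 / 2) (by norm_num) (by norm_num)
    (by norm_num)
  simp only [smul_eq_mul] at this
  rw [show 1 / 2 * (x - 1 / 2) + 1 / 2 * (x + 1 / 2) = x by ring] at this
  have := hup (x - 1 / 2)
  have := hup (x + 1 / 2)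
  nlinarith

/-- A monic polynomial of even degree at least two with bounded coefficients dominates `t² / 2`
up to an additive constant. -/
theorem exists_sq_sub_le_pow_sub_sum {N : ℕ} (hN : 2 ≤ N) (hNeven : Even N)
    (a : Fin N → ℝ → ℝ) (ha : ∀ i, ∃ C : ℝ, ∀ x, |a i x| ≤ C) :
    ∃ D : ℝ, 0 ≤ D ∧ ∀ x t : ℝ, t ^ 2 / 2 - D ≤ t ^ N - ∑ i : Fin N, a i x * t ^ (i : ℕ) := by
  choose B hB using ha
  have hB0 : ∀ i, 0 ≤ B i := fun i => (abs_nonneg _).trans (hB i 0)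
  set C := 1 + ∑ i, B i with hC
  have hC1 : 1 ≤ C := by
    have := Finset.sum_nonneg fun i (_ : i ∈ Finset.univ) => hB0 i
    linarith
  have hsum : ∀ x t : ℝ, ∀ M : ℝ, (∀ i : Fin N, |t| ^ (i : ℕ) ≤ M) →
      ∑ i : Fin N, a i x * t ^ (i : ℕ) ≤ C * M := by
    intro x t M hM
    have hM0 : 0 ≤ M := (pow_nonneg (abs_nonneg t) _).trans (hM ⟨0, by omega⟩)
    calc ∑ i : Fin N, a i x * t ^ (i : ℕ) ≤ ∑ i : Fin N, B i * M := by
          refine Finset.sum_le_sum fun i _ => (le_abs_self _).trans ?_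
          rw [abs_mul, abs_pow]
          exact mul_le_mul (hB i x) (hM i) (by positivity) (hB0 i)
      _ = (∑ i, B i) * M := (Finset.sum_mul _ _ _).symm
      _ ≤ C * M := mul_le_mul_of_nonneg_right (by linarith) hM0
  refine ⟨C * C ^ N + C ^ 2, by positivity, fun x t => ?_⟩
  rw [← hNeven.pow_abs t, ← sq_abs t]
  have ht0 := abs_nonneg t
  rcases le_total |t| C with h | h
  · have := hsum x t (C ^ N) fun i =>
      (pow_le_pow_left₀ ht0 h _).trans (pow_le_pow_right₀ hC1 i.2.le)
    have : 0 ≤ |t| ^ N := by positivity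
    nlinarith
  · have ht1 : 1 ≤ |t| := hC1.trans h
    have := hsum x t (|t| ^ (N - 2 + 1)) fun i => pow_le_pow_right₀ ht1 (by omega)
    have hpow : |t| ^ N = |t| ^ (N - 2) * |t| ^ 2 := by
      rw [← pow_add]
      congr 1
      omega
    rw [pow_succ] at this
    have hone : 1 ≤ |t| ^ (N - 2) := one_le_pow₀ ht1
    have hfac : |t| ^ 2 - C * |t| ≤ |t| ^ (N - 2) * (|t| ^ 2 - C * |t|) :=
      le_mul_of_one_le_left (by nlinarith) hone
    have : 0 ≤ C * C ^ N := by positivity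
    nlinarith [sq_nonneg (|t| - C)]

/-- In one spatial dimension, with `N ≥ 2` even and bounded coefficients
`a₀, …, a_{N-1}`, every twice differentiable solution `w : ℝ → ℝ` of the equilibrium
equation `w'' = w^N - ∑_{i<N} aᵢ wⁱ` is bounded from below. -/
theorem equilibria_bounded_below_one_dim
    {N : ℕ} (hN : 2 ≤ N) (hNeven : Even N)
    (a : Fin N → ℝ → ℝ) (ha : ∀ i, ∃ C : ℝ, ∀ x, |a i x| ≤ C)
    (w : ℝ → ℝ) (hw : Differentiable ℝ w) (hw' : Differentiable ℝ (deriv w))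
    (heq : ∀ x : ℝ, deriv (deriv w) x = w x ^ N - ∑ i : Fin N, a i x * w x ^ (i : ℕ)) :
    ∃ c : ℝ, ∀ x : ℝ, c ≤ w x := by
  obtain ⟨D, hD, hdom⟩ := exists_sq_sub_le_pow_sub_sum hN hNeven a ha
  exact exists_le_of_sq_sub_le_second_deriv (fun x => (hw x).hasDerivAt)
    (fun x => (hw' x).hasDerivAt) hD fun x => (heq x).symm ▸ hdom x (w x)

end
end
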